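/- Let X be a measurable space, D a probability measure on X, and f_1, …, f_N : X → Bool measurable target functions. Let H be a finite nonempty set of measurable hypotheses h : X → Bool, and let 0 < ε < 1 and 0 < δ ≤ 1. If m ≥ (1/ε) · ln(N · |H| / δ), then with probability at least 1 − δ under the m-fold product measure D^m, for every index i ∈ {1, …, N} and every hypothesis h ∈ H that agrees with f_i on all m coordinates of the sample, one has D{x | h x ≠ f_i x} ≤ ε. -/

import Mathlib

open MeasureTheory
open scoped ENNReal

/-!
The errors of the hypotheses with respect to the targets form a family of `N * |H|` sets, and a
hypothesis is consistent with a target on a sample exactly when the sample misses their error set.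
So the theorem says that a random sample is, with high probability, an `ε`-net for this family. An
independent sample of size `m` misses a given set of measure more than `ε` with probability at most
`(1 - ε) ^ m ≤ exp (-ε * m)`, and a union bound over the family finishes the argument.
-/

theorem mul_exp_neg_le_of_log_div_le {c δ t : ℝ} (hδ : 0 < δ) (h : Real.log (c / δ) ≤ t) :
    c * Real.exp (-t) ≤ δ := by
  have div_le_exp : c / δ ≤ Real.exp t := (Real.le_exp_log _).trans (Real.exp_le_exp.mpr h)
  rwa [Real.exp_neg, ← div_eq_mul_inv, div_le_iff₀ (Real.exp_pos t), mul_comm, ← div_le_iff₀ hδ]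

section EpsNet

variable {X κ σ : Type*} [MeasurableSpace X]

/-- The points `s j` form an `ε`-net for the family `E` of ranges with respect to `D`: they hit
every range of measure more than `ε`. -/
def IsEpsNet (D : Measure X) (ε : ℝ≥0∞) (E : κ → Set X) (s : σ → X) : Prop :=
  ∀ k, ε < D (E k) → ∃ j, s j ∈ E k

theorem measure_compl_le_ofReal_exp_neg {D : Measure X} [IsProbabilityMeasure D] {E : Set X}
    (hE : NullMeasurableSet E D) {ε : ℝ} (hε : ENNReal.ofReal ε ≤ D E) :
    D Eᶜ ≤ ENNReal.ofReal (Real.exp (-ε)) :=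
  calc
    D Eᶜ = 1 - D E := prob_compl_eq_one_sub₀ hE
    _ ≤ ENNReal.ofReal 1 - ENNReal.ofReal ε := by
      rw [ENNReal.ofReal_one]
      exact tsub_le_tsub_left hε 1
    _ ≤ ENNReal.ofReal (1 - ε) := by
      rw [tsub_le_iff_right]
      simpa only [sub_add_cancel] using ENNReal.ofReal_add_le (p := 1 - ε) (q := ε)
    _ ≤ ENNReal.ofReal (Real.exp (-ε)) := ENNReal.ofReal_le_ofReal (Real.one_sub_le_exp_neg ε)

variable [Fintype σ] (D : Measure X) [IsProbabilityMeasure D]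

theorem measure_pi_forall_notMem_le {E : Set X} (hE : NullMeasurableSet E D) {ε : ℝ}
    (hε : ENNReal.ofReal ε ≤ D E) :
    (Measure.pi fun _ : σ => D) {s | ∀ j, s j ∉ E} ≤
      ENNReal.ofReal (Real.exp (-(ε * Fintype.card σ))) :=
  calc
    (Measure.pi fun _ : σ => D) {s | ∀ j, s j ∉ E}
      = (Measure.pi fun _ : σ => D) (Set.univ.pi fun _ => Eᶜ) := by
        congr 1
        ext s
        simp only [Set.mem_ofPred_eq, Set.mem_univ_pi, Set.mem_compl_iff]
    _ = D Eᶜ ^ Fintype.card σ := by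
      rw [Measure.pi_pi, Finset.prod_const, Finset.card_univ]
    _ ≤ ENNReal.ofReal (Real.exp (-ε)) ^ Fintype.card σ := by
      gcongr
      exact measure_compl_le_ofReal_exp_neg hE hε
    _ = ENNReal.ofReal (Real.exp (-(ε * Fintype.card σ))) := by
      rw [← ENNReal.ofReal_pow (Real.exp_pos _).le, ← Real.exp_nat_mul, mul_neg, mul_comm]

variable [Fintype κ]

theorem measure_pi_not_isEpsNet_le {E : κ → Set X} (hE : ∀ k, NullMeasurableSet (E k) D)
    (ε : ℝ) :
    (Measure.pi fun _ : σ => D) {s | ¬ IsEpsNet D (ENNReal.ofReal ε) E s} ≤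
      ENNReal.ofReal (Fintype.card κ * Real.exp (-(ε * Fintype.card σ))) := by
  have not_isEpsNet_eq : {s : σ → X | ¬ IsEpsNet D (ENNReal.ofReal ε) E s} =
      ⋃ k, {s | ENNReal.ofReal ε < D (E k) ∧ ∀ j, s j ∉ E k} := by
    ext s
    simp only [IsEpsNet, Set.mem_ofPred_eq, Set.mem_iUnion, not_forall, not_exists, exists_prop]
  have miss_le (k : κ) :
      (Measure.pi fun _ : σ => D) {s | ENNReal.ofReal ε < D (E k) ∧ ∀ j, s j ∉ E k} ≤
        ENNReal.ofReal (Real.exp (-(ε * Fintype.card σ))) := by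
    by_cases hk : ENNReal.ofReal ε < D (E k)
    · simpa only [hk, true_and] using measure_pi_forall_notMem_le D (hE k) hk.le
    · simp [hk]
  calc
    (Measure.pi fun _ : σ => D) {s | ¬ IsEpsNet D (ENNReal.ofReal ε) E s}
      ≤ ∑ k, (Measure.pi fun _ : σ => D)
          {s | ENNReal.ofReal ε < D (E k) ∧ ∀ j, s j ∉ E k} := by
        rw [not_isEpsNet_eq]
        exact measure_iUnion_fintype_le _ _
    _ ≤ ∑ _k : κ, ENNReal.ofReal (Real.exp (-(ε * Fintype.card σ))) :=
      Finset.sum_le_sum fun k _ => miss_le k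
    _ = ENNReal.ofReal (Fintype.card κ * Real.exp (-(ε * Fintype.card σ))) := by
      rw [Finset.sum_const, Finset.card_univ, nsmul_eq_mul,
        ENNReal.ofReal_mul (Nat.cast_nonneg _), ENNReal.ofReal_natCast]

theorem ofReal_one_sub_le_measure_pi_isEpsNet {E : κ → Set X}
    (hE : ∀ k, NullMeasurableSet (E k) D) {ε δ : ℝ} (hδ : 0 < δ)
    (hσ : Real.log (Fintype.card κ / δ) ≤ ε * Fintype.card σ) :
    ENNReal.ofReal (1 - δ) ≤
      (Measure.pi fun _ : σ => D) {s | IsEpsNet D (ENNReal.ofReal ε) E s} := by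
  have not_isEpsNet_le : (Measure.pi fun _ : σ => D) {s | IsEpsNet D (ENNReal.ofReal ε) E s}ᶜ ≤
      ENNReal.ofReal δ :=
    (measure_pi_not_isEpsNet_le D hE ε).trans
      (ENNReal.ofReal_le_ofReal (mul_exp_neg_le_of_log_div_le hδ hσ))
  rw [ENNReal.ofReal_sub 1 hδ.le, ENNReal.ofReal_one, tsub_le_iff_right,
    ← measure_univ (μ := Measure.pi fun _ : σ => D)]
  exact (measure_univ_le_add_compl _).trans (by gcongr)

end EpsNet

theorem stmt_7_general {X Y ι σ : Type*} [MeasurableSpace X] [Fintype ι] [Fintype σ]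
    (D : Measure X) [IsProbabilityMeasure D] (f : ι → X → Y) (H : Finset (X → Y))
    (hfH : ∀ i, ∀ h ∈ H, NullMeasurableSet {x | h x ≠ f i x} D)
    {ε δ : ℝ} (hε : 0 < ε) (hδ : 0 < δ)
    (hσ : (1 / ε) * Real.log (Fintype.card ι * H.card / δ) ≤ Fintype.card σ) :
    ENNReal.ofReal (1 - δ) ≤
      (Measure.pi fun _ : σ => D)
        {s | ∀ i, ∀ h ∈ H, (∀ j, h (s j) = f i (s j)) →
          D {x | h x ≠ f i x} ≤ ENNReal.ofReal ε} := by
  let errorSet : ι × H → Set X := fun p => {x | p.2.1 x ≠ f p.1 x}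
  have errorSet_meas (p : ι × H) : NullMeasurableSet (errorSet p) D := hfH p.1 p.2.1 p.2.2
  have log_le : Real.log (Fintype.card (ι × H) / δ) ≤ ε * Fintype.card σ := by
    rw [Fintype.card_prod, Fintype.card_coe, Nat.cast_mul]
    rwa [one_div, inv_mul_le_iff₀ hε] at hσ
  refine (ofReal_one_sub_le_measure_pi_isEpsNet D errorSet_meas hδ log_le).trans
    (measure_mono fun s s_net i h hh h_consistent => ?_)
  by_contra! error_gt
  obtain ⟨j, h_ne⟩ := s_net (i, ⟨h, hh⟩) error_gt
  exact h_ne (h_consistent j)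

/-- Simultaneous Occam Theorem for `N` targets: if
`m ≥ (1/ε) * ln (N * |H| / δ)`, then with probability at least `1 - δ` over an
`m`-sample from `D`, for every target `f i` and every hypothesis `h ∈ H` that
agrees with `f i` on all `m` coordinates, the error of `h` w.r.t. `f i` is at
most `ε`. -/
theorem stmt_7 {X : Type*} [MeasurableSpace X] (D : Measure X) [IsProbabilityMeasure D]
    (N : ℕ) (f : Fin N → X → Bool) (hf : ∀ i, Measurable (f i))
    (H : Finset (X → Bool)) (hHne : H.Nonempty) (hH : ∀ h ∈ H, Measurable h)
    (ε δ : ℝ) (hε0 : 0 < ε) (hε1 : ε < 1) (hδ0 : 0 < δ) (hδ1 : δ ≤ 1)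
    (m : ℕ) (hm : (1 / ε) * Real.log ((N : ℝ) * (H.card : ℝ) / δ) ≤ (m : ℝ)) :
    ENNReal.ofReal (1 - δ) ≤
      (Measure.pi fun _ : Fin m => D)
        {s | ∀ i, ∀ h ∈ H, (∀ j, h (s j) = f i (s j)) →
          D {x | h x ≠ f i x} ≤ ENNReal.ofReal ε} := by
  exact stmt_7_general D f H
    (fun i h hh => (measurableSet_eq_fun (hH h hh) (hf i)).compl.nullMeasurableSet)
    hε0 hδ0 (by simpa only [Fintype.card_fin] using hm)
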